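/- Let T be a pretriangulated category in which every object is a finite direct sum of objects with local endomorphism rings (a Krull-Schmidt category). Let C and B be indecomposable objects, f: C → B a nonzero morphism that is not an isomorphism, and n ≥ 1. Suppose (a) for every indecomposable object X admitting a chain of irreducible maps of some length m ≥ 0 from X to B (including X = B via the empty chain), there exists an Auslander-Reiten triangle ending in X; and (b) there is no chain of irreducible maps from C to B of length less than n. Then there exist indecomposable objects P^0, …, P^{n−1}, irreducible morphisms g^1: P^0 → P^1, …, g^{n−1}: P^{n−2} → P^{n−1}, g^n: P^{n−1} → B, and a morphism h: C → P^0 such that g^n ∘ ⋯ ∘ g^1 ∘ h ≠ 0. -/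

import Mathlib

/-!
The chain is built backwards from `B`, one irreducible map at a time. Suppose `h : Co ⟶ X` is not an
isomorphism and `h ≫ k ≠ 0`, where `k : X ⟶ B` is a composite of `n` irreducible maps between
indecomposables. A retraction between indecomposables is an isomorphism
(`LocalEnd.isIso_of_isSplitEpi`), so `h` factors as `h' ≫ v` through the middle term `Y` of the
Auslander-Reiten triangle `W ⟶ Y ⟶ X ⟶ W⟦1⟧`. Decomposing `Y` into objects with local
endomorphism rings, some component `Co ⟶ Yᵢ ⟶ X ⟶ B` of `h' ≫ v ≫ k` is nonzero, and
`Yᵢ ⟶ X` is irreducible (`IsARTriangle.irreducibleMor_comp`). The new map `Co ⟶ Yᵢ` cannot be an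
isomorphism as long as the chain is too short to be a chain starting at `Co`, so the step can be
repeated.

Irreducibility of the components rests on the right minimality of `v`: an endomorphism `φ` of `Y`
with `φ ≫ v = v` extends to an endomorphism of the triangle which is the identity on `X`; the
induced endomorphism `a` of `W` is an isomorphism, since otherwise `𝟙 - a` is one, and its shift
kills the nonzero connecting morphism. By the five lemma `φ` is an isomorphism.
-/

open CategoryTheory Limits Pretriangulated

variable {C : Type*} [Category C] [Preadditive C] [HasZeroObject C] [HasShift C ℤ]
  [∀ n : ℤ, (CategoryTheory.shiftFunctor C n).Additive] [Pretriangulated C]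
  [HasFiniteBiproducts C]

/-- An object is indecomposable if it is nonzero and not isomorphic to a direct sum of
two nonzero objects. -/
def Indec (X : C) : Prop :=
  ¬ IsZero X ∧ ∀ Y Z : C, ¬ IsZero Y → ¬ IsZero Z → IsEmpty (X ≅ Y ⊞ Z)

/-- An Auslander-Reiten triangle: a distinguished triangle with indecomposable end terms,
nonzero connecting morphism, such that every non-retraction into the third object factors
through the second morphism. -/
def IsARTriangle (T : Triangle C) : Prop :=
  (T ∈ (distTriang C)) ∧ Indec T.obj₁ ∧ Indec T.obj₃ ∧ T.mor₃ ≠ 0 ∧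
  ∀ (W : C) (f : W ⟶ T.obj₃), ¬ IsSplitEpi f → ∃ f' : W ⟶ T.obj₂, f' ≫ T.mor₂ = f

/-- A morphism is irreducible if it is neither a section nor a retraction, and in any
factorization one of the two factors is a section or a retraction respectively. -/
def IrreducibleMor {X Y : C} (f : X ⟶ Y) : Prop :=
  ¬ IsSplitMono f ∧ ¬ IsSplitEpi f ∧
  ∀ (Z : C) (h : X ⟶ Z) (g : Z ⟶ Y), h ≫ g = f → IsSplitMono h ∨ IsSplitEpi g

/-- There is a chain of irreducible maps of length `m` from `X` to `Y` through
indecomposable objects. -/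
def HasIrrChain : ℕ → C → C → Prop
  | 0, X, Y => X = Y
  | (m + 1), X, Y => ∃ Z : C, Indec Z ∧ (∃ g : X ⟶ Z, IrreducibleMor g) ∧ HasIrrChain m Z Y

/-- The composite of the first `m` maps of a sequence of composable morphisms. -/
def compChain (P : ℕ → C) (g : ∀ i, P i ⟶ P (i + 1)) : ∀ m : ℕ, (P 0 ⟶ P m)
  | 0 => 𝟙 (P 0)
  | (m + 1) => compChain P g m ≫ g m

set_option linter.unusedSectionVars false

/-! ### Objects with local endomorphism rings -/

/-- The object `X` is nonzero and, for every endomorphism `a`, one of `a` and `𝟙 - a` is an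
isomorphism; that is, the endomorphism ring of `X` is local. -/
def LocalEnd (X : C) : Prop :=
  ¬ IsZero X ∧ ∀ a : X ⟶ X, IsIso a ∨ IsIso (𝟙 X - a)

lemma localEnd_of_isLocalRing {X : C} (h : IsLocalRing (End X)) : LocalEnd X := by
  refine ⟨fun hX => ?_, fun a => ?_⟩
  · exact one_ne_zero (α := End X) (hX.eq_of_src _ _)
  · let b : End X := a
    have hu : IsUnit (b + (1 - b)) := by rw [add_sub_cancel]; exact isUnit_one
    exact (IsLocalRing.isUnit_or_isUnit_of_isUnit_add hu).imp
      (isUnit_iff_isIso b).1 (isUnit_iff_isIso (1 - b)).1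

lemma LocalEnd.of_iso {X Y : C} (hX : LocalEnd X) (e : X ≅ Y) : LocalEnd Y := by
  refine ⟨fun hY => hX.1 (hY.of_iso e), fun a => ?_⟩
  rcases hX.2 (e.hom ≫ a ≫ e.inv) with h | h
  · left
    have : a = e.inv ≫ (e.hom ≫ a ≫ e.inv) ≫ e.hom := by simp
    rw [this]; infer_instance
  · right
    have : 𝟙 Y - a = e.inv ≫ (𝟙 X - e.hom ≫ a ≫ e.inv) ≫ e.hom := by simp
    rw [this]; infer_instance

/-- A section from a nonzero object into an object with local endomorphism ring is an isomorphism,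
because the only idempotents of a local ring are `0` and `1`. -/
lemma LocalEnd.isIso_of_section {A X : C} (hX : LocalEnd X) (hA : ¬ IsZero A)
    (s : A ⟶ X) (r : X ⟶ A) (h : s ≫ r = 𝟙 A) : IsIso s := by
  rcases hX.2 (r ≫ s) with hi | hi
  · refine ⟨r, h, ?_⟩
    rw [← cancel_epi (r ≫ s)]
    simp [reassoc_of% h]
  · exfalso
    apply hA
    have h0 : s = 0 := by
      rw [← cancel_mono (𝟙 X - r ≫ s)]
      simp [reassoc_of% h]
    rw [IsZero.iff_id_eq_zero, ← h, h0, zero_comp]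

lemma LocalEnd.indec {X : C} (hX : LocalEnd X) : Indec X := by
  refine ⟨hX.1, fun Y Z hY hZ => ⟨fun e => hZ ?_⟩⟩
  have hi : IsIso (biprod.inl ≫ e.inv) :=
    hX.isIso_of_section hY (biprod.inl ≫ e.inv) (e.hom ≫ biprod.fst) (by simp)
  have h0 : e.hom ≫ (biprod.snd : Y ⊞ Z ⟶ Z) = 0 := by
    rw [← cancel_epi (biprod.inl ≫ e.inv)]
    simp
  have h1 : (biprod.snd : Y ⊞ Z ⟶ Z) = 0 := by
    rw [← cancel_epi e.hom, h0, comp_zero]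
  rw [IsZero.iff_id_eq_zero, ← biprod.inr_snd (X := Y) (Y := Z), h1, comp_zero]

/-- A biproduct is the direct sum of one of its factors and of the biproduct of the others. -/
lemma exists_iso_biprod {m : ℕ} (Y : Fin m → C) (i : Fin m) :
    Nonempty ((⨁ Y) ≅ Y i ⊞ ⨁ (Subtype.restrict (fun j => j ≠ i) Y)) := by
  refine ⟨⟨biprod.lift (biproduct.π Y i) (biproduct.toSubtype Y _),
    biprod.desc (biproduct.ι Y i) (biproduct.fromSubtype Y _), ?_, ?_⟩⟩
  · rw [biprod.lift_desc, biproduct.toSubtype_fromSubtype]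
    refine biproduct.hom_ext _ _ fun j => ?_
    by_cases hj : j = i
    · subst hj
      simp
    · simp [biproduct.ι_π_ne _ (Ne.symm hj), hj]
  · refine biprod.hom_ext' _ _ (biprod.hom_ext _ _ ?_ ?_) (biprod.hom_ext _ _ ?_ ?_)
    · simp
    · refine biproduct.hom_ext _ _ fun j => ?_
      simp
    · refine biproduct.hom_ext' _ _ fun j => ?_
      simp
    · simp [biproduct.fromSubtype_toSubtype]

/-- In a Krull-Schmidt category, indecomposable objects have local endomorphism rings. -/
lemma Indec.localEnd
    (hKS : ∀ X : C, ∃ (m : ℕ) (Y : Fin m → C),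
      (∀ i, IsLocalRing (End (Y i))) ∧ Nonempty (X ≅ ⨁ Y))
    {X : C} (hX : Indec X) : LocalEnd X := by
  obtain ⟨m, Y, hY, ⟨e⟩⟩ := hKS X
  cases m with
  | zero =>
    refine absurd ?_ hX.1
    refine IsZero.of_iso ?_ e
    rw [IsZero.iff_id_eq_zero]
    ext j
    exact j.elim0
  | succ m =>
    obtain ⟨e'⟩ := exists_iso_biprod Y 0
    have h0 := localEnd_of_isLocalRing (hY 0)
    by_cases hZ : IsZero (⨁ (Subtype.restrict (fun j => j ≠ 0) Y))
    · refine h0.of_iso (Iso.symm (e ≪≫ e' ≪≫ ?_))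
      refine ⟨biprod.fst, biprod.inl, ?_, by simp⟩
      exact biprod.hom_ext' _ _ (by simp) (hZ.eq_of_src _ _)
    · exact ((hX.2 _ _ h0.1 hZ).false (e ≪≫ e')).elim

lemma LocalEnd.isIso_of_isSplitEpi {X Y : C} (hX : LocalEnd X) (hY : LocalEnd Y)
    (f : X ⟶ Y) (hf : IsSplitEpi f) : IsIso f := by
  have : IsIso (section_ f) := hX.isIso_of_section hY.1 (section_ f) f (IsSplitEpi.id f)
  have h2 : f = inv (section_ f) := by
    rw [← cancel_epi (section_ f)]
    simp
  rw [h2]; infer_instance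

/-! ### Auslander-Reiten triangles -/

lemma IsARTriangle.not_isSplitEpi {T : Triangle C} (hT : IsARTriangle T) :
    ¬ IsSplitEpi T.mor₂ := by
  intro h
  apply hT.2.2.2.1
  rw [← Category.id_comp T.mor₃, ← IsSplitEpi.id T.mor₂, Category.assoc,
    comp_distTriang_mor_zero₂₃ _ hT.1, comp_zero]

/-- The second morphism of an Auslander-Reiten triangle is right minimal. -/
lemma IsARTriangle.isIso_of_comp_eq {T : Triangle C} (hT : IsARTriangle T)
    (h₁ : LocalEnd T.obj₁) (φ : T.obj₂ ⟶ T.obj₂) (hφ : φ ≫ T.mor₂ = T.mor₂) : IsIso φ := by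
  obtain ⟨a, ha₁, ha₃⟩ := complete_distinguished_triangle_morphism₁ T T hT.1 hT.1 φ (𝟙 _)
    (by rw [hφ, Category.comp_id])
  rw [Category.id_comp] at ha₃
  have ha : IsIso a := by
    rcases h₁.2 a with h | h
    · exact h
    · exfalso
      apply hT.2.2.2.1
      rw [← cancel_mono ((𝟙 T.obj₁ - a)⟦(1 : ℤ)⟧'), zero_comp, Functor.map_sub,
        Preadditive.comp_sub, ha₃, CategoryTheory.Functor.map_id, Category.comp_id, sub_self]
  exact isIso₂_of_isIso₁₃
    ({ hom₁ := a, hom₂ := φ, hom₃ := 𝟙 _, comm₁ := ha₁, comm₂ := by simp [hφ],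
       comm₃ := by simpa using ha₃ } : T ⟶ T) hT.1 hT.1 ha inferInstance

/-- In an Auslander-Reiten triangle, the restriction of the second morphism to a direct summand
with local endomorphism ring of the middle term is irreducible. -/
lemma IsARTriangle.irreducibleMor_comp {T : Triangle C} (hT : IsARTriangle T)
    (h₁ : LocalEnd T.obj₁) (h₃ : LocalEnd T.obj₃) {A : C} (hA : LocalEnd A)
    (i : A ⟶ T.obj₂) (p : T.obj₂ ⟶ A) (hip : i ≫ p = 𝟙 A) :
    IrreducibleMor (i ≫ T.mor₂) := by
  have hepi : ¬ IsSplitEpi (i ≫ T.mor₂) := fun h => hT.not_isSplitEpi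
    (IsSplitEpi.mk' ⟨section_ (i ≫ T.mor₂) ≫ i, by
      rw [Category.assoc]; exact IsSplitEpi.id (i ≫ T.mor₂)⟩)
  refine ⟨fun h => hepi ?_, hepi, fun Z a b hab => ?_⟩
  · have := h₃.isIso_of_section hA.1 _ _ (IsSplitMono.id (i ≫ T.mor₂))
    infer_instance
  · rw [or_iff_not_imp_right]
    intro hb
    obtain ⟨b', hb'⟩ := hT.2.2.2.2 Z b hb
    -- `φ` is `a ≫ b'` on the summand `A` and the identity on its complement.
    let φ : T.obj₂ ⟶ T.obj₂ := p ≫ a ≫ b' + (𝟙 _ - p ≫ i)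
    have hφ : φ ≫ T.mor₂ = T.mor₂ := by
      simp [φ, hb', hab]
    have hiso := hT.isIso_of_comp_eq h₁ φ hφ
    have hiφ : i ≫ φ = a ≫ b' := by
      simp [φ, reassoc_of% hip]
    refine IsSplitMono.mk' ⟨b' ≫ inv φ ≫ p, ?_⟩
    rw [← Category.assoc a, ← hiφ]
    simp [hip]

/-! ### Composites of irreducible maps -/

/-- `IrrComp B n X k` says that `k : X ⟶ B` is a composite of `n` irreducible morphisms whose
sources are indecomposable. -/
inductive IrrComp (B : C) : ℕ → ∀ X : C, (X ⟶ B) → Prop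
  | nil : IrrComp B 0 B (𝟙 B)
  | cons {n : ℕ} {X Y : C} (g : X ⟶ Y) (k : Y ⟶ B) (hX : Indec X) (hg : IrreducibleMor g)
      (hk : IrrComp B n Y k) : IrrComp B (n + 1) X (g ≫ k)

lemma IrrComp.indec {B : C} (hB : Indec B) {n : ℕ} {X : C} {k : X ⟶ B}
    (h : IrrComp B n X k) : Indec X := by
  cases h with
  | nil => exact hB
  | cons g k hX hg hk => exact hX

lemma IrrComp.hasIrrChain {B : C} (hB : Indec B) {n : ℕ} {X : C} {k : X ⟶ B}
    (h : IrrComp B n X k) : HasIrrChain n X B := by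
  induction h with
  | nil => rfl
  | cons g k hX hg hk ih => exact ⟨_, hk.indec hB, ⟨g, hg⟩, ih⟩

lemma IrreducibleMor.iso_comp {A X Y : C} (e : A ⟶ X) [IsIso e] {g : X ⟶ Y}
    (hg : IrreducibleMor g) : IrreducibleMor (e ≫ g) := by
  refine ⟨fun h => hg.1 ?_, fun h => hg.2.1 ?_, fun Z a b hab => ?_⟩
  · have : g = inv e ≫ e ≫ g := by simp
    rw [this]; infer_instance
  · have : g = inv e ≫ e ≫ g := by simp
    rw [this]; infer_instance
  · refine (hg.2.2 Z (inv e ≫ a) b (by simp [hab])).imp_left fun h => ?_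
    obtain ⟨⟨r, hr⟩⟩ := h
    refine IsSplitMono.mk' ⟨r ≫ inv e, ?_⟩
    rw [Category.assoc] at hr
    rw [← cancel_epi (inv e), reassoc_of% hr, Category.comp_id]

lemma IrrComp.hasIrrChain_of_isIso {B : C} (hB : Indec B) {n : ℕ} {A X : C} {k : X ⟶ B}
    (h : IrrComp B (n + 1) X k) (e : A ⟶ X) [IsIso e] : HasIrrChain (n + 1) A B := by
  cases h with
  | cons g k hX hg hk => exact ⟨_, hk.indec hB, ⟨e ≫ g, hg.iso_comp e⟩, hk.hasIrrChain hB⟩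

/-- The sequence of objects obtained by prepending `X` to `P`. -/
def consObj (X : C) (P : ℕ → C) : ℕ → C
  | 0 => X
  | i + 1 => P i

/-- The sequence of morphisms obtained by prepending `f` to `g`. -/
def consMor {X : C} {P : ℕ → C} (f : X ⟶ P 0) (g : ∀ i, P i ⟶ P (i + 1)) :
    ∀ i, consObj X P i ⟶ consObj X P (i + 1)
  | 0 => f
  | i + 1 => g i

lemma compChain_cons {X : C} {P : ℕ → C} (f : X ⟶ P 0) (g : ∀ i, P i ⟶ P (i + 1)) (m : ℕ) :
    compChain (consObj X P) (consMor f g) (m + 1) = f ≫ compChain P g m := by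
  induction m with
  | zero => exact (Category.id_comp f).trans (Category.comp_id f).symm
  | succ m ih =>
    change compChain (consObj X P) (consMor f g) (m + 1) ≫ g m = f ≫ compChain P g m ≫ g m
    rw [ih]
    exact Category.assoc _ _ _

lemma IrrComp.exists_compChain {B : C} {n : ℕ} {X : C} {k : X ⟶ B} (h : IrrComp B n X k) :
    ∃ (P : ℕ → C) (g : ∀ i, P i ⟶ P (i + 1)) (e : X = P 0) (e' : P n = B),
      (∀ i, i < n → Indec (P i)) ∧ (∀ i, i < n → IrreducibleMor (g i)) ∧
      k = eqToHom e ≫ compChain P g n ≫ eqToHom e' := by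
  induction h with
  | nil => exact ⟨fun _ => B, fun _ => 0, rfl, rfl, by simp, by simp, by simp [compChain]⟩
  | @cons n X Y f k hX hf hk ih =>
    obtain ⟨P, g, e, e', hP, hg, rfl⟩ := ih
    subst e
    refine ⟨consObj X P, consMor f g, rfl, e', ?_, ?_, ?_⟩
    · rintro (_ | i) hi
      · exact hX
      · exact hP i (by omega)
    · rintro (_ | i) hi
      · exact hf
      · exact hg i (by omega)
    · rw [compChain_cons]
      simp only [eqToHom_refl, Category.id_comp]
      exact ((Category.id_comp _).trans (Category.assoc f (compChain P g n) (eqToHom e'))).symm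

/-- Prolonging a chain on the left: a map `h` that is not a retraction and has nonzero composite
with a composite of irreducible maps factors, up to keeping the composite nonzero, through one
more irreducible map. -/
lemma IrrComp.exists_cons
    (hKS : ∀ X : C, ∃ (m : ℕ) (Y : Fin m → C),
      (∀ i, IsLocalRing (End (Y i))) ∧ Nonempty (X ≅ ⨁ Y))
    {A B X : C} {n : ℕ} {k : X ⟶ B} (hk : IrrComp B n X k) (hX : Indec X)
    {T : Triangle C} (hT : IsARTriangle T) (hTX : T.obj₃ = X)
    (h : A ⟶ X) (hh : ¬ IsSplitEpi h) (hne : h ≫ k ≠ 0) :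
    ∃ (X' : C) (k' : X' ⟶ B) (h' : A ⟶ X'), IrrComp B (n + 1) X' k' ∧ h' ≫ k' ≠ 0 := by
  subst hTX
  obtain ⟨a, rfl⟩ := hT.2.2.2.2 A h hh
  obtain ⟨m, Y, hY, ⟨e⟩⟩ := hKS T.obj₂
  have hsum : (a ≫ T.mor₂) ≫ k =
      ∑ j, (a ≫ e.hom ≫ biproduct.π Y j) ≫ ((biproduct.ι Y j ≫ e.inv) ≫ T.mor₂) ≫ k := by
    have h1 : (𝟙 T.obj₂) = ∑ j, (e.hom ≫ biproduct.π Y j) ≫ (biproduct.ι Y j ≫ e.inv) := by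
      have h2 := e.hom ≫= (biproduct.total (f := Y) =≫ e.inv)
      simp only [Preadditive.sum_comp, Preadditive.comp_sum, Category.id_comp, Category.assoc,
        e.hom_inv_id] at h2 ⊢
      exact h2.symm
    calc (a ≫ T.mor₂) ≫ k = a ≫ 𝟙 T.obj₂ ≫ T.mor₂ ≫ k := by simp
      _ = _ := by
        rw [h1]
        simp only [Preadditive.sum_comp, Preadditive.comp_sum, Category.assoc]
  rw [hsum] at hne
  obtain ⟨j, -, hj⟩ := Finset.exists_ne_zero_of_sum_ne_zero hne
  have hYj := localEnd_of_isLocalRing (hY j)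
  exact ⟨Y j, _, _, .cons _ k hYj.indec
    (hT.irreducibleMor_comp (hT.2.1.localEnd hKS) (hX.localEnd hKS) hYj
      (biproduct.ι Y j ≫ e.inv) (e.hom ≫ biproduct.π Y j) (by simp)) hk, hj⟩

/-- In a Krull-Schmidt pretriangulated category, if `f : C ⟶ B` is a nonzero
non-isomorphism between indecomposables, every indecomposable having a chain of
irreducible maps to `B` admits an Auslander-Reiten triangle ending in it, and there is no
chain of irreducible maps from `C` to `B` of length `< n`, then there is a chain of `n`
irreducible maps `P⁰ → ⋯ → P^{n-1} → B` and a map `h : C ⟶ P⁰` with nonzero composite. -/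
theorem chain_of_irreducibles_to_B
    (hKS : ∀ X : C, ∃ (m : ℕ) (Y : Fin m → C),
      (∀ i, IsLocalRing (End (Y i))) ∧ Nonempty (X ≅ ⨁ Y))
    {Co B : C} (hCo : Indec Co) (hB : Indec B)
    (f : Co ⟶ B) (hf0 : f ≠ 0) (hfiso : ¬ IsIso f)
    (n : ℕ) (hn : 1 ≤ n)
    (ha : ∀ X : C, Indec X → (∃ m : ℕ, HasIrrChain m X B) →
      ∃ (W Y : C) (u : W ⟶ Y) (v : Y ⟶ X) (w : X ⟶ W⟦(1 : ℤ)⟧),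
        IsARTriangle (Triangle.mk u v w))
    (hb : ∀ m : ℕ, m < n → ¬ HasIrrChain m Co B) :
    ∃ (P : ℕ → C) (g : ∀ i, P i ⟶ P (i + 1)) (h : Co ⟶ P 0),
      P n = B ∧ (∀ i, i < n → Indec (P i)) ∧ (∀ i, i < n → IrreducibleMor (g i)) ∧
      h ≫ compChain P g n ≠ 0 := by
  have key : ∀ m : ℕ, m ≤ n → ∃ (X : C) (k : X ⟶ B) (h : Co ⟶ X),
      IrrComp B m X k ∧ h ≫ k ≠ 0 ∧ (m < n → ¬ IsIso h) := by
    intro m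
    induction m with
    | zero => exact fun _ => ⟨B, 𝟙 B, f, .nil, by simpa using hf0, fun _ => hfiso⟩
    | succ m ih =>
      intro hm
      obtain ⟨X, k, h, hk, hne, hiso⟩ := ih (by omega)
      have hX : Indec X := hk.indec hB
      obtain ⟨W, Y, u, v, w, hT⟩ := ha X hX ⟨m, hk.hasIrrChain hB⟩
      obtain ⟨X', k', h', hk', hne'⟩ := hk.exists_cons hKS hX hT rfl h
        (fun hs => hiso (by omega)
          ((hCo.localEnd hKS).isIso_of_isSplitEpi (hX.localEnd hKS) h hs)) hne
      exact ⟨X', k', h', hk', hne', fun hlt _ => hb _ hlt (hk'.hasIrrChain_of_isIso hB h')⟩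
  obtain ⟨X, k, h, hk, hne, -⟩ := key n le_rfl
  obtain ⟨P, g, e, e', hP, hg, rfl⟩ := hk.exists_compChain
  refine ⟨P, g, h ≫ eqToHom e, e', hP, hg, fun h0 => hne ?_⟩
  rw [Category.assoc] at h0
  rw [← Category.assoc (eqToHom e), ← Category.assoc h, h0, zero_comp]
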